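/- arXiv:2505.14545 — 2 statements merged into one kernel-verified Lean document; each statement's English description precedes it below -/
import Mathlib

section
/- Let $P$ and $Q$ be associative dg-algebras over a field $k$ concentrated in non-negative degrees with $H^\bullet(P) \cong k$ and $H^\bullet(Q) \cong k$, and assume $Q$ is augmented with augmentation ideal $\bar Q$ (which is then acyclic). Then the coproduct (free product) $P * Q$ in the category of associative dg-algebras satisfies $H^\bullet(P * Q) \cong k$. -/
/-- A differential graded algebra over `k`, concentrated in non-negative degrees: an
`ℕ`-graded `k`-algebra equipped with a square-zero degree `+1` differential satisfying
the graded Leibniz rule. -/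
structure DGA (k : Type) [Field k] where
  A : Type
  ringA : Ring A
  algA : @Algebra k A _ ringA.toSemiring
  grading : ℕ → @Submodule k A _ (@AddCommGroup.toAddCommMonoid _ ringA.toAddCommGroup)
    (@Algebra.toModule k A _ ringA.toSemiring algA)
  graded : @GradedAlgebra ℕ k A _ _ _ _ _ grading
  d : A →ₗ[k] A
  d_sq : d.comp d = 0
  d_deg : ∀ (i : ℕ) (a : A), a ∈ grading i → d a ∈ grading (i + 1)
  leibniz : ∀ (i : ℕ) (a : A), a ∈ grading i → ∀ b : A,
    d (a * b) = d a * b + ((-1 : k) ^ i) • (a * d b)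

attribute [instance] DGA.ringA DGA.algA

/-- The (total) cohomology of a dg-algebra: `ker d / im d`. -/
def DGA.H {k : Type} [Field k] (X : DGA k) : Type :=
  ↥(LinearMap.ker X.d) ⧸
    (Submodule.comap (LinearMap.ker X.d).subtype (LinearMap.range X.d))

noncomputable instance {k : Type} [Field k] (X : DGA k) : AddCommGroup X.H := by
  unfold DGA.H; infer_instance

noncomputable instance {k : Type} [Field k] (X : DGA k) : Module k X.H := by
  unfold DGA.H; infer_instance

/-- A homomorphism of dg-algebras: an algebra map preserving the grading and commuting
with the differentials. -/
structure DGAHom {k : Type} [Field k] (X Y : DGA k) where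
  toAlg : X.A →ₐ[k] Y.A
  map_d : ∀ a : X.A, toAlg (X.d a) = Y.d (toAlg a)
  map_grading : ∀ (i : ℕ) (a : X.A), a ∈ X.grading i → toAlg a ∈ Y.grading i

namespace FP

open Polynomial

attribute [local instance] DGA.graded

section general

variable {k : Type} [Field k] (X : DGA k)

theorem hom_ind {motive : X.A → Prop} (h0 : motive 0)
    (h1 : ∀ (i : ℕ) (a : X.A), a ∈ X.grading i → motive a)
    (h2 : ∀ a b, motive a → motive b → motive (a + b)) (a : X.A) : motive a :=
  DirectSum.Decomposition.inductionOn X.grading h0 (fun {i} m => h1 i m m.2) h2 a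

/-- an algebra map out of `X` from maps on the graded pieces -/
noncomputable def mkHom {B : Type} [Ring B] [Algebra k B] (f : ℕ → X.A →ₗ[k] B)
    (h1 : f 0 1 = 1)
    (hm : ∀ i j a b, a ∈ X.grading i → b ∈ X.grading j → f (i + j) (a * b) = f i a * f j b) :
    X.A →ₐ[k] B :=
  (DirectSum.toAlgebra k (fun i => X.grading i) (fun i => (f i).comp (X.grading i).subtype)
    h1 (fun {i j} a b => hm i j a b a.2 b.2)).comp
    (DirectSum.decomposeAlgEquiv X.grading).toAlgHom

theorem mkHom_apply {B : Type} [Ring B] [Algebra k B] (f : ℕ → X.A →ₗ[k] B)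
    (h1 : f 0 1 = 1)
    (hm : ∀ i j a b, a ∈ X.grading i → b ∈ X.grading j → f (i + j) (a * b) = f i a * f j b)
    (i : ℕ) (a : X.A) (ha : a ∈ X.grading i) : mkHom X f h1 hm a = f i a := by
  have : DirectSum.decomposeAlgEquiv X.grading a
      = DirectSum.lof k ℕ (fun i => X.grading i) i ⟨a, ha⟩ :=
    DirectSum.decompose_of_mem X.grading ha
  have h2 : mkHom X f h1 hm a = DirectSum.toModule k ℕ B
      (fun i => (f i).comp (X.grading i).subtype) (DirectSum.decomposeAlgEquiv X.grading a) := rfl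
  rw [h2, this, DirectSum.toModule_lof]
  rfl

/-- the sign involution -/
noncomputable def sg : X.A →ₐ[k] X.A :=
  mkHom X (fun i => ((-1 : k) ^ i) • LinearMap.id) (by simp) (by
    intro i j a b _ _
    simp [pow_add, smul_smul, mul_comm])

theorem sg_apply (i : ℕ) (a : X.A) (ha : a ∈ X.grading i) : sg X a = ((-1 : k) ^ i) • a := by
  unfold sg
  rw [mkHom_apply X _ _ _ i a ha]; rfl

theorem sg_sg (a : X.A) : sg X (sg X a) = a := by
  induction a using hom_ind X with
  | h0 => simp
  | h1 i a ha =>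
    rw [sg_apply X i a ha, map_smul, sg_apply X i a ha, smul_smul, ← mul_pow]; simp
  | h2 a b ha hb => simp [ha, hb]

theorem d_sg (a : X.A) : X.d (sg X a) = - sg X (X.d a) := by
  induction a using hom_ind X with
  | h0 => simp
  | h1 i a ha =>
    rw [sg_apply X i a ha, sg_apply X _ _ (X.d_deg i a ha), map_smul, pow_succ]; simp
  | h2 a b ha hb => simp [ha, hb]; abel

theorem d_mul (a b : X.A) : X.d (a * b) = X.d a * b + sg X a * X.d b := by
  induction a using hom_ind X with
  | h0 => simp
  | h1 i a ha => rw [X.leibniz i a ha, sg_apply X i a ha]; simp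
  | h2 a a' ha hb => simp [add_mul, ha, hb]; abel

theorem d_d (a : X.A) : X.d (X.d a) = 0 := LinearMap.congr_fun X.d_sq a

theorem one_mem : (1 : X.A) ∈ X.grading 0 := SetLike.GradedOne.one_mem

theorem d_one : X.d 1 = 0 := by
  have := X.leibniz 0 1 (one_mem X) 1
  simpa using this

theorem hom_sg {X Y : DGA k} (f : DGAHom X Y) (a : X.A) : f.toAlg (sg X a) = sg Y (f.toAlg a) := by
  induction a using hom_ind X with
  | h0 => simp
  | h1 i a ha => rw [sg_apply X i a ha, sg_apply Y i _ (f.map_grading i a ha), map_smul]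
  | h2 a b ha hb => simp [ha, hb]

/-- degree zero projection -/
noncomputable def pr : X.A →ₗ[k] X.A := GradedAlgebra.proj X.grading 0

theorem pr_zero (a : X.A) (ha : a ∈ X.grading 0) : pr X a = a := by
  simp only [pr, GradedAlgebra.proj_apply]
  exact DirectSum.decompose_of_mem_same X.grading ha

theorem pr_pos (i : ℕ) (hi : i ≠ 0) (a : X.A) (ha : a ∈ X.grading i) : pr X a = 0 := by
  simp only [pr, GradedAlgebra.proj_apply]
  exact DirectSum.decompose_of_mem_ne X.grading ha hi

theorem pr_d (a : X.A) : pr X (X.d a) = 0 := by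
  induction a using hom_ind X with
  | h0 => simp
  | h1 i a ha => exact pr_pos X _ (Nat.succ_ne_zero i) _ (X.d_deg i a ha)
  | h2 a b ha hb => simp [ha, hb]

theorem pr_sg (a : X.A) : pr X (sg X a) = pr X a := by
  induction a using hom_ind X with
  | h0 => simp
  | h1 i a ha =>
    rw [sg_apply X i a ha, map_smul]
    by_cases hi : i = 0
    · subst hi; simp
    · rw [pr_pos X i hi a ha]; simp
  | h2 a b ha hb => simp [ha, hb]

theorem one_not_bdry (h : (1 : X.A) ≠ 0) (x : X.A) : X.d x ≠ 1 := by
  intro hx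
  have := pr_d X x
  rw [hx, pr_zero X 1 (one_mem X)] at this
  exact h this

/-- class of a cycle -/
noncomputable def cls : LinearMap.ker X.d →ₗ[k] X.H :=
  (Submodule.comap (LinearMap.ker X.d).subtype (LinearMap.range X.d)).mkQ

theorem cls_surj : Function.Surjective (cls X) := Submodule.mkQ_surjective _

theorem cls_eq_zero (z : LinearMap.ker X.d) : cls X z = 0 ↔ ∃ x, X.d x = z := by
  have : cls X z = 0 ↔ z ∈ (Submodule.comap (LinearMap.ker X.d).subtype (LinearMap.range X.d)) :=
    Submodule.Quotient.mk_eq_zero _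
  rw [this]; simp

theorem H_one (h : Nonempty (X.H ≃ₗ[k] k)) : (1 : X.A) ≠ 0 := by
  obtain ⟨e⟩ := h
  intro h1
  have hs : ∀ x : X.A, x = 0 := fun x => by rw [← mul_one x, h1, mul_zero]
  obtain ⟨z, hz⟩ := cls_surj X (e.symm 1)
  have : cls X z = 0 := (cls_eq_zero X z).2 ⟨0, by rw [hs z.1]; simp⟩
  rw [this] at hz
  have := congrArg e hz
  simp at this

theorem H_cycle (h : Nonempty (X.H ≃ₗ[k] k)) (z : X.A) (hz : X.d z = 0) :
    ∃ (c : k) (x : X.A), z = c • 1 + X.d x := by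
  have h1 := H_one X h
  obtain ⟨e⟩ := h
  let o : LinearMap.ker X.d := ⟨1, d_one X⟩
  let z' : LinearMap.ker X.d := ⟨z, hz⟩
  have ho : cls X o ≠ 0 := by
    rw [Ne, cls_eq_zero]; rintro ⟨x, hx⟩; exact one_not_bdry X h1 x hx
  have hu : e (cls X o) ≠ 0 := by simpa using ho
  let c := e (cls X z') / e (cls X o)
  have : cls X (z' - c • o) = 0 := by
    apply e.injective
    simp only [map_sub, map_smul, map_zero, smul_eq_mul, c]
    field_simp; simp
  obtain ⟨x, hx⟩ := (cls_eq_zero X _).1 this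
  refine ⟨c, x, ?_⟩
  rw [hx]
  simp [o, z']

theorem H_of (h1 : (1 : X.A) ≠ 0)
    (hc : ∀ z : X.A, X.d z = 0 → ∃ (c : k) (x : X.A), z = c • 1 + X.d x) :
    Nonempty (X.H ≃ₗ[k] k) := by
  let o : LinearMap.ker X.d := ⟨1, d_one X⟩
  have ho : cls X o ≠ 0 := by
    rw [Ne, cls_eq_zero]; rintro ⟨x, hx⟩; exact one_not_bdry X h1 x hx
  refine ⟨(LinearEquiv.ofBijective (LinearMap.toSpanSingleton k X.H (cls X o)) ⟨?_, ?_⟩).symm⟩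
  · rw [injective_iff_map_eq_zero]
    intro c hc
    simpa [ho] using hc
  · intro y
    obtain ⟨z, rfl⟩ := cls_surj X y
    obtain ⟨c, x, hx⟩ := hc z z.2
    refine ⟨c, ?_⟩
    rw [LinearMap.toSpanSingleton_apply, ← sub_eq_zero, ← map_smul, ← map_sub, cls_eq_zero]
    refine ⟨-x, ?_⟩
    simp [o, hx]

end general

section contraction

variable {k : Type} [Field k]

/-- a contraction of `X` onto `k` together with an adapted basis -/
structure Ctr (X : DGA k) where
  I : Type
  β : Module.Basis (Unit ⊕ I) k X.A
  h : X.A →ₗ[k] X.A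
  lam : X.A →ₗ[k] k
  β_inl : β (Sum.inl ()) = 1
  lam_one : lam 1 = 1
  lam_inr : ∀ i, lam (β (Sum.inr i)) = 0
  lam_d : ∀ a, lam (X.d a) = 0
  lam_sg : ∀ a, lam (sg X a) = lam a
  h_one : h 1 = 0
  htpy : ∀ a, X.d (h a) + h (X.d a) = a - lam a • 1
  h_sg : ∀ a, h (sg X a) = - sg X (h a)

theorem exists_basis {A : Type} [AddCommGroup A] [Module k A] (lam : A →ₗ[k] k) (u : A)
    (hu : lam u = 1) : ∃ (I : Type) (β : Module.Basis (Unit ⊕ I) k A),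
    β (Sum.inl ()) = u ∧ ∀ i, lam (β (Sum.inr i)) = 0 := by
  let e : (k × LinearMap.ker lam) ≃ₗ[k] A :=
    { toFun := fun x => x.1 • u + x.2.1
      map_add' := fun x y => by simp [add_smul]; abel
      map_smul' := fun c x => by simp [smul_smul]
      invFun := fun a => (lam a, ⟨a - lam a • u, by simp [hu]⟩)
      left_inv := fun x => by
        have := x.2.2
        rw [LinearMap.mem_ker] at this
        ext <;> simp [hu, this]
      right_inv := fun a => by simp }
  let b := Module.Basis.ofVectorSpace k (LinearMap.ker lam)
  refine ⟨_, ((Module.Basis.singleton Unit k).prod b).map e, ?_, ?_⟩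
  · simp [e]
  · intro i
    simp [e]

theorem exists_ctr (X : DGA k) (hX : Nonempty (X.H ≃ₗ[k] k)) : Nonempty (Ctr X) := by
  have h1 := H_one X hX
  obtain ⟨f, hf⟩ := Module.Projective.exists_dual_eq_one k h1
  let lam : X.A →ₗ[k] k := f.comp (pr X)
  have lam_one : lam 1 = 1 := by simp [lam, pr_zero X 1 (one_mem X), hf]
  have lam_d : ∀ a, lam (X.d a) = 0 := fun a => by simp [lam, pr_d]
  have lam_sg : ∀ a, lam (sg X a) = lam a := fun a => by simp [lam, pr_sg]
  obtain ⟨I, β, hβ, hβ'⟩ := exists_basis lam 1 lam_one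
  have hcyc : ∀ z, X.d z = 0 → lam z = 0 → ∃ x, X.d x = z := by
    intro z hz hl
    obtain ⟨c, x, hx⟩ := H_cycle X hX z hz
    have : c = 0 := by
      have := congrArg lam hx
      simpa [lam_one, lam_d, hl, eq_comm] using this
    exact ⟨x, by simp [hx, this]⟩
  obtain ⟨g0, hg0⟩ := X.d.rangeRestrict.exists_rightInverse_of_surjective
    (LinearMap.range_rangeRestrict _)
  obtain ⟨g1, hg1⟩ := LinearMap.exists_extend g0
  have hg1 : ∀ x, X.d (g1 (X.d x)) = X.d x := by
    intro x
    have e1 : g1 (X.d x) = g0 ⟨X.d x, x, rfl⟩ := LinearMap.congr_fun hg1 ⟨X.d x, x, rfl⟩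
    have e2 := LinearMap.congr_fun hg0 ⟨X.d x, x, rfl⟩
    rw [e1]
    exact congrArg Subtype.val e2
  let g : X.A →ₗ[k] X.A := g1 - (lam.comp g1).smulRight 1
  have hg : ∀ x, X.d (g (X.d x)) = X.d x := by intro x; simp [g, hg1, d_one]
  have lam_g : ∀ x, lam (g x) = 0 := by intro x; simp [g, lam_one]
  let h' : X.A →ₗ[k] X.A := g.comp (LinearMap.id - g.comp X.d - lam.smulRight 1)
  have hh' : ∀ a, h' a = g (a - g (X.d a) - lam a • 1) := fun a => rfl
  have h'_one : h' 1 = 0 := by simp [hh', d_one, lam_one]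
  have htpy' : ∀ a, X.d (h' a) + h' (X.d a) = a - lam a • 1 := by
    intro a
    obtain ⟨x, hx⟩ := hcyc (a - g (X.d a) - lam a • 1) (by simp [hg, d_one])
      (by simp [lam_g, lam_one])
    have e1 : X.d (h' a) = a - g (X.d a) - lam a • 1 := by rw [hh', ← hx, hg]
    have e2 : h' (X.d a) = g (X.d a) := by simp [hh', d_d, lam_d]
    rw [e1, e2]; abel
  by_cases h2 : (2 : k) = 0
  · have hneg : (-1 : k) = 1 := by
      have : (1 : k) + 1 = 0 := by rw [one_add_one_eq_two, h2]
      exact (eq_neg_of_add_eq_zero_left this).symm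
    have hs : ∀ a, sg X a = a := by
      intro a
      induction a using hom_ind X with
      | h0 => simp
      | h1 i a ha => rw [sg_apply X i a ha, hneg]; simp
      | h2 a b ha hb => simp [ha, hb]
    refine ⟨⟨I, β, h', lam, hβ, lam_one, hβ', lam_d, lam_sg, h'_one, htpy', ?_⟩⟩
    intro a
    rw [hs, hs, ← neg_one_smul k, hneg, one_smul]
  · let h : X.A →ₗ[k] X.A := (2 : k)⁻¹ • (h' - (sg X).toLinearMap.comp (h'.comp (sg X).toLinearMap))
    have hh : ∀ a, h a = (2 : k)⁻¹ • (h' a - sg X (h' (sg X a))) := fun a => rfl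
    refine ⟨⟨I, β, h, lam, hβ, lam_one, hβ', lam_d, lam_sg, ?_, ?_, ?_⟩⟩
    · simp [hh, h'_one]
    · intro a
      have e := congrArg (sg X) (htpy' (sg X a))
      simp only [map_add, map_sub, map_smul, map_one, sg_sg, lam_sg, d_sg, map_neg] at e
      have e2 : X.d (h a) + h (X.d a) = (2 : k)⁻¹ •
          ((X.d (h' a) + h' (X.d a)) + (sg X (X.d (h' (sg X a))) + -sg X (h' (sg X (X.d a))))) := by
        simp only [hh, map_smul, map_sub, d_sg, ← smul_add]
        congr 1
        abel
      rw [e2, e, htpy', ← two_smul k, smul_smul, inv_mul_cancel₀ h2, one_smul]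
    · intro a
      simp only [hh, map_smul, map_sub, sg_sg, ← smul_neg]
      congr 1
      abel

end contraction

section endo

variable {k : Type} [Field k] {M : Type} [AddCommGroup M] [Module k M]

/-- the graded pieces of `End(M)[t]` -/
noncomputable def gr (k : Type) [Field k] (M : Type) [AddCommGroup M] [Module k M] (n : ℕ) :
    Submodule k (Module.End k M)[X] :=
  LinearMap.range ((monomial n : Module.End k M →ₗ[Module.End k M] _).restrictScalars k)

theorem mem_gr (n : ℕ) (p : (Module.End k M)[X]) :
    p ∈ gr k M n ↔ ∃ a, monomial n a = p := Iff.rfl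

/-- monomials as elements of the graded pieces -/
noncomputable def mg (k : Type) [Field k] (M : Type) [AddCommGroup M] [Module k M] (n : ℕ) :
    Module.End k M →ₗ[k] gr k M n :=
  LinearMap.codRestrict (gr k M n)
    ((monomial n : Module.End k M →ₗ[Module.End k M] _).restrictScalars k) (fun a => ⟨a, rfl⟩)

theorem lsum_mono {N : Type} [AddCommMonoid N] [Module k N] (f : ℕ → Module.End k M →ₗ[k] N)
    (n : ℕ) (a : Module.End k M) : Polynomial.lsum f (monomial n a) = f n a :=
  sum_monomial_index a (fun n a => f n a) (map_zero _)

noncomputable instance : GradedAlgebra (gr k M) where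
  one_mem := ⟨1, rfl⟩
  mul_mem := by
    rintro i j _ _ ⟨a, rfl⟩ ⟨b, rfl⟩
    exact ⟨a * b, (monomial_mul_monomial i j a b).symm⟩
  toDecomposition := DirectSum.Decomposition.ofLinearMap (gr k M)
    (Polynomial.lsum (fun n => (DirectSum.lof k ℕ (fun n => gr k M n) n).comp
      (mg k M n)))
    (by
      ext1 p
      induction p using Polynomial.induction_on' with
      | add p q hp hq => simpa only [map_add] using congrArg₂ (· + ·) hp hq
      | monomial n a =>
        rw [LinearMap.comp_apply, lsum_mono, LinearMap.comp_apply, DirectSum.coeLinearMap_lof]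
        rfl)
    (by
      ext1 n
      ext1 ⟨_, a, rfl⟩
      rw [LinearMap.comp_apply, LinearMap.comp_apply, DirectSum.coeLinearMap_lof]
      refine (lsum_mono (fun n => (DirectSum.lof k ℕ (fun n => gr k M n) n).comp (mg k M n))
        n a).trans ?_
      rfl)

/-- the differential on `End(M)[t]` -/
noncomputable def dE (δ : Module.End k M) : (Module.End k M)[X] →ₗ[k] (Module.End k M)[X] :=
  Polynomial.lsum (fun n =>
    ((monomial (n + 1) : Module.End k M →ₗ[Module.End k M] _).restrictScalars k).comp
      (LinearMap.mulLeft k δ - ((-1 : k) ^ n) • LinearMap.mulRight k δ))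

theorem dE_mono (δ : Module.End k M) (n : ℕ) (a : Module.End k M) :
    dE δ (monomial n a) = monomial (n + 1) (δ * a - ((-1 : k) ^ n) • (a * δ)) := lsum_mono _ n a

/-- the dg-algebra `End(M)[t]` -/
noncomputable def EndDGA (δ : Module.End k M) (hδ : δ * δ = 0) : DGA k where
  A := (Module.End k M)[X]
  ringA := inferInstance
  algA := inferInstance
  grading := gr k M
  graded := inferInstance
  d := dE δ
  d_sq := by
    ext1 p
    induction p using Polynomial.induction_on' with
    | add p q hp hq => simpa only [map_add] using congrArg₂ (· + ·) hp hq
    | monomial n a =>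
      rw [LinearMap.comp_apply, dE_mono, dE_mono]
      have : δ * (δ * a - ((-1 : k) ^ n) • (a * δ)) -
          ((-1 : k) ^ (n + 1)) • ((δ * a - ((-1 : k) ^ n) • (a * δ)) * δ) = 0 := by
        simp only [mul_sub, sub_mul, ← mul_assoc, hδ, zero_mul, mul_smul_comm, smul_mul_assoc]
        simp only [mul_assoc, hδ, mul_zero, pow_succ]
        simp
      rw [this]; simp
  d_deg := by
    rintro i _ ⟨a, rfl⟩
    exact ⟨_, (dE_mono δ i a).symm⟩
  leibniz := by
    rintro i _ ⟨a, rfl⟩ p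
    change dE δ (monomial i a * p) = dE δ (monomial i a) * p + ((-1 : k) ^ i) • (monomial i a * dE δ p)
    induction p using Polynomial.induction_on' with
    | add p q hp hq => simp only [mul_add, map_add, hp, hq, smul_add]; abel
    | monomial j b =>
      rw [monomial_mul_monomial, dE_mono, dE_mono, dE_mono, monomial_mul_monomial,
        monomial_mul_monomial, smul_monomial]
      rw [show i + 1 + j = i + j + 1 by ring, show i + (j + 1) = i + j + 1 by ring, ← map_add]
      congr 1
      simp only [mul_sub, sub_mul, smul_sub, smul_mul_assoc, mul_smul_comm, smul_smul, mul_assoc,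
        pow_add]
      abel

/-- evaluation at `t = 1` -/
noncomputable def ev (k : Type) [Field k] (M : Type) [AddCommGroup M] [Module k M] :
    (Module.End k M)[X] →ₐ[k] Module.End k M :=
  AlgHom.ofLinearMap (Polynomial.lsum (fun _ => LinearMap.id))
    (lsum_mono _ 0 1) (by
      intro p q
      induction p using Polynomial.induction_on' with
      | add p p' hp hp' => simp only [add_mul, map_add, hp, hp']
      | monomial i a =>
        induction q using Polynomial.induction_on' with
        | add p p' hp hp' => simp only [mul_add, map_add, hp, hp']
        | monomial j b =>
          rw [monomial_mul_monomial, lsum_mono, lsum_mono, lsum_mono]; rfl)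

theorem ev_mono (n : ℕ) (a : Module.End k M) : ev k M (monomial n a) = a := lsum_mono _ n a

/-- `ρ` is a dg-representation on `(M, δ)`. -/
def IsRep (X : DGA k) (δ : Module.End k M) (ρ : X.A →ₐ[k] Module.End k M) : Prop :=
  ∀ a, ρ (X.d a) = δ * ρ a - ρ (sg X a) * δ

/-- the algebra map of a representation -/
noncomputable def repAlg (X : DGA k) (ρ : X.A →ₐ[k] Module.End k M) :
    X.A →ₐ[k] (Module.End k M)[X] := mkHom X (fun n =>
    ((monomial n : Module.End k M →ₗ[Module.End k M] _).restrictScalars k).comp ρ.toLinearMap)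
    (by simp) (by intro i j a b _ _; simp [monomial_mul_monomial])

theorem repAlg_mono (X : DGA k) (ρ : X.A →ₐ[k] Module.End k M) (i : ℕ) (a : X.A)
    (ha : a ∈ X.grading i) : repAlg X ρ a = monomial i (ρ a) := by
  unfold repAlg
  rw [mkHom_apply X _ _ _ i a ha]
  rfl

/-- the dg-algebra map of a representation -/
noncomputable def repHom (X : DGA k) (δ : Module.End k M) (hδ : δ * δ = 0)
    (ρ : X.A →ₐ[k] Module.End k M) (hρ : IsRep X δ ρ) : DGAHom X (EndDGA δ hδ) where
  toAlg := repAlg X ρ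
  map_d := by
    intro a
    change repAlg X ρ (X.d a) = dE δ (repAlg X ρ a)
    induction a using hom_ind X with
    | h0 => simp
    | h1 i a ha =>
      rw [repAlg_mono X ρ i a ha, repAlg_mono X ρ _ _ (X.d_deg i a ha), dE_mono, hρ,
        sg_apply X i a ha, map_smul, smul_mul_assoc]
    | h2 a b ha hb => simp [ha, hb]
  map_grading := fun i a ha => ⟨ρ a, (repAlg_mono X ρ i a ha).symm⟩

theorem repHom_mono (X : DGA k) (δ : Module.End k M) (hδ : δ * δ = 0)
    (ρ : X.A →ₐ[k] Module.End k M) (hρ : IsRep X δ ρ) (i : ℕ) (a : X.A) (ha : a ∈ X.grading i) :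
    (repHom X δ hδ ρ hρ).toAlg a = (monomial i (ρ a) : (Module.End k M)[X]) :=
  repAlg_mono X ρ i a ha

theorem repHom_ev (X : DGA k) (δ : Module.End k M) (hδ : δ * δ = 0)
    (ρ : X.A →ₐ[k] Module.End k M) (hρ : IsRep X δ ρ) (a : X.A) :
    ev k M ((repHom X δ hδ ρ hρ).toAlg a) = ρ a := by
  induction a using hom_ind X with
  | h0 => exact (map_zero ((ev k M).comp (repHom X δ hδ ρ hρ).toAlg)).trans (map_zero ρ).symm
  | h1 i a ha => rw [repHom_mono X δ hδ ρ hρ i a ha, ev_mono]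
  | h2 a b ha hb =>
    rw [map_add ρ, ← ha, ← hb]
    exact map_add ((ev k M).comp (repHom X δ hδ ρ hρ).toAlg) a b

theorem rep_of_hom (X : DGA k) (δ : Module.End k M) (hδ : δ * δ = 0)
    (f : DGAHom X (EndDGA δ hδ)) : IsRep X δ ((ev k M).comp f.toAlg) := by
  intro a
  induction a using hom_ind X with
  | h0 => simp
  | h1 i a ha =>
    obtain ⟨e, he⟩ := f.map_grading i a ha
    have he : (monomial i e : (Module.End k M)[X]) = f.toAlg a := he
    have h1 : f.toAlg (X.d a) = dE δ (monomial i e) := by rw [he]; exact f.map_d a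
    rw [sg_apply X i a ha, map_smul]
    change ev k M (f.toAlg (X.d a)) = δ * ev k M (f.toAlg a) - ((-1 : k) ^ i • ev k M (f.toAlg a)) * δ
    rw [h1, ← he, dE_mono, ev_mono, ev_mono, smul_mul_assoc]
  | h2 a b ha hb => simp only [map_add, ha, hb, mul_add, add_mul]; abel

end endo

section words

variable {k : Type} [Field k] {X : Bool → DGA k} (K : ∀ b, Ctr (X b))

/-- reduced words -/
def Wd : Type := {l : List (Σ b, (K b).I) // l.IsChain (fun x y => x.1 ≠ y.1)}

/-- the word does not start with a letter of type `b` -/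
def HN (b : Bool) (w : Wd K) : Prop := ∀ y ∈ w.1.head?, b ≠ y.1

/-- reduced words not starting with `b` -/
def Wb (b : Bool) : Type := {w : Wd K // HN K b w}

/-- empty word -/
def wnil : Wd K := ⟨[], List.isChain_nil⟩

theorem HN_nil (b : Bool) : HN K b (wnil K) := by intro y hy; simp [wnil] at hy

variable {K}

/-- add a letter -/
def wcons (b : Bool) (i : (K b).I) (w : Wb K b) : Wd K :=
  ⟨⟨b, i⟩ :: w.1.1, List.isChain_cons.2 ⟨w.2, w.1.2⟩⟩

theorem HN_cons (b c : Bool) (h : c ≠ b) (i : (K b).I) (w : Wb K b) : HN K c (wcons b i w) := by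
  intro y hy
  simp [wcons] at hy
  subst hy; exact h

theorem HN_cons_ne (b c : Bool) (i : (K b).I) (w : Wb K b) (h : HN K c (wcons b i w)) : c ≠ b :=
  h ⟨b, i⟩ (by simp [wcons])

theorem wd_ind {motive : Wd K → Prop} (h0 : motive (wnil K))
    (h1 : ∀ b i (w : Wb K b), motive w.1 → motive (wcons b i w)) (w : Wd K) : motive w := by
  obtain ⟨l, hl⟩ := w
  induction l with
  | nil => exact h0
  | cons x l ih =>
    obtain ⟨b, i⟩ := x
    have := List.isChain_cons.1 hl
    exact h1 b i ⟨⟨l, this.2⟩, this.1⟩ (ih this.2)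

/-- assembling words -/
def asm (b : Bool) : (Σ _ : Wb K b, (Unit ⊕ (K b).I)) → Wd K
  | ⟨w, Sum.inl _⟩ => w.1
  | ⟨w, Sum.inr i⟩ => wcons b i w

theorem asm_bij (b : Bool) : Function.Bijective (asm (K := K) b) := by
  constructor
  · rintro ⟨w, _ | i⟩ ⟨w', _ | i'⟩ h
    · have : w = w' := Subtype.ext h
      subst this; rfl
    · exfalso
      have h : w.1 = wcons b i' w' := h
      have := w.2
      rw [h] at this
      exact HN_cons_ne b b i' w' this rfl
    · exfalso
      have h : wcons b i w = w'.1 := h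
      have := w'.2
      rw [← h] at this
      exact HN_cons_ne b b i w this rfl
    · have h : wcons b i w = wcons b i' w' := h
      have h := congrArg Subtype.val h
      simp only [wcons, List.cons.injEq, Sigma.mk.injEq, true_and, heq_eq_eq] at h
      obtain ⟨rfl, h2⟩ := h
      have : w = w' := Subtype.ext (Subtype.ext h2)
      subst this; rfl
  · intro w
    induction w using wd_ind with
    | h0 => exact ⟨⟨⟨wnil K, HN_nil K b⟩, Sum.inl ()⟩, rfl⟩
    | h1 c i w _ =>
      by_cases h : b = c
      · subst h; exact ⟨⟨w, Sum.inr i⟩, rfl⟩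
      · exact ⟨⟨⟨wcons c i w, HN_cons c b h i w⟩, Sum.inl ()⟩, rfl⟩

variable (K)

/-- the free product as a vector space -/
abbrev FF : Type := Wd K →₀ k

/-- `⊕_{w} A_b` has a basis indexed by words -/
noncomputable def bas (b : Bool) : Module.Basis (Wd K) k (Wb K b →₀ (X b).A) :=
  (Finsupp.basis (fun _ : Wb K b => (K b).β)).reindex (Equiv.ofBijective _ (asm_bij b))

theorem bas_asm (b : Bool) (w : Wb K b) (j : Unit ⊕ (K b).I) :
    bas K b (asm b ⟨w, j⟩) = Finsupp.single w ((K b).β j) := by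
  have : asm b ⟨w, j⟩ = Equiv.ofBijective _ (asm_bij (K := K) b) ⟨w, j⟩ := rfl
  rw [this, bas, Module.Basis.reindex_apply, Equiv.symm_apply_apply, Finsupp.coe_basis]

/-- `a ↦ a · w` -/
noncomputable def emb (b : Bool) (w : Wb K b) : (X b).A →ₗ[k] FF K :=
  (bas K b).repr.toLinearMap.comp (Finsupp.lsingle w)

/-- a word as a basis vector -/
noncomputable def wv (w : Wd K) : FF K := Finsupp.single w 1

theorem emb_inl (b : Bool) (w : Wb K b) : emb K b w 1 = wv K w.1 := by
  have := bas_asm K b w (Sum.inl ())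
  rw [(K b).β_inl] at this
  simp only [emb, LinearMap.comp_apply, Finsupp.lsingle_apply, LinearEquiv.coe_coe, ← this,
    Module.Basis.repr_self]
  rfl

theorem emb_inr (b : Bool) (w : Wb K b) (i : (K b).I) :
    emb K b w ((K b).β (Sum.inr i)) = wv K (wcons b i w) := by
  simp only [emb, LinearMap.comp_apply, Finsupp.lsingle_apply, LinearEquiv.coe_coe,
    ← bas_asm K b w (Sum.inr i), Module.Basis.repr_self]
  rfl

/-- action of `A_b` -/
noncomputable def act (b : Bool) : (X b).A →ₐ[k] Module.End k (FF K) :=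
  (LinearEquiv.conjAlgEquiv k (bas K b).repr).toAlgHom.comp
    (Algebra.lsmul k k (Wb K b →₀ (X b).A))

theorem act_emb (b : Bool) (w : Wb K b) (p a : (X b).A) :
    act K b p (emb K b w a) = emb K b w (p * a) := by
  have : act K b p (emb K b w a) =
    (bas K b).repr (p • ((bas K b).repr.symm ((bas K b).repr (Finsupp.single w a)))) := rfl
  rw [this, LinearEquiv.symm_apply_apply, Finsupp.smul_single]
  rfl

theorem act_wv (b : Bool) (w : Wb K b) (p : (X b).A) :
    act K b p (wv K w.1) = emb K b w p := by
  rw [← emb_inl, act_emb, mul_one]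

theorem FF_ext {N : Type} [AddCommGroup N] [Module k N] {f g : FF K →ₗ[k] N}
    (h : ∀ w, f (wv K w) = g (wv K w)) : f = g := by
  apply Finsupp.lhom_ext'
  intro w
  apply LinearMap.ext_ring
  exact h w

theorem FF_ext_emb (b : Bool) {N : Type} [AddCommGroup N] [Module k N] {f g : FF K →ₗ[k] N}
    (h : ∀ w a, f (emb K b w a) = g (emb K b w a)) : f = g := by
  apply FF_ext
  intro w
  obtain ⟨⟨w', _ | i⟩, rfl⟩ := (asm_bij b).2 w
  · have := h w' 1
    rwa [emb_inl] at this
  · have := h w' ((K b).β (Sum.inr i))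
    rwa [emb_inr] at this

theorem A_ext (b : Bool) {N : Type} [AddCommGroup N] [Module k N] {f g : (X b).A →ₗ[k] N}
    (h1 : f 1 = g 1) (h : ∀ i, f ((K b).β (Sum.inr i)) = g ((K b).β (Sum.inr i))) : f = g := by
  apply (K b).β.ext
  rintro (u | i)
  · cases u; rw [(K b).β_inl]; exact h1
  · exact h i

/-- differential on words -/
noncomputable def dl : (l : List (Σ b, (K b).I)) → l.IsChain (fun x y => x.1 ≠ y.1) → FF K
  | [], _ => 0
  | ⟨b, i⟩ :: l, h =>
    emb K b ⟨⟨l, (List.isChain_cons.1 h).2⟩, (List.isChain_cons.1 h).1⟩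
      ((X b).d ((K b).β (Sum.inr i))) +
    act K b (sg (X b) ((K b).β (Sum.inr i))) (dl l (List.isChain_cons.1 h).2)

/-- differential -/
noncomputable def DD : Module.End k (FF K) := Finsupp.lift _ k _ (fun w : Wd K => dl K w.1 w.2)

theorem lift_wv {N : Type} [AddCommGroup N] [Module k N] (f : Wd K → N) (w : Wd K) :
    Finsupp.lift N k _ f (wv K w) = f w := by
  simp [wv]

theorem DD_nil : DD K (wv K (wnil K)) = 0 := lift_wv K _ _

theorem DD_cons (b : Bool) (i : (K b).I) (w : Wb K b) : DD K (wv K (wcons b i w)) =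
    emb K b w ((X b).d ((K b).β (Sum.inr i))) +
    act K b (sg (X b) ((K b).β (Sum.inr i))) (DD K (wv K w.1)) := by
  unfold DD
  rw [lift_wv, lift_wv]
  rfl

theorem DD_emb (b : Bool) (w : Wb K b) (a : (X b).A) : DD K (emb K b w a) =
    emb K b w ((X b).d a) + act K b (sg (X b) a) (DD K (wv K w.1)) := by
  have : (DD K).comp (emb K b w) = (emb K b w).comp (X b).d +
      (LinearMap.applyₗ (DD K (wv K w.1))).comp
        ((act K b).toLinearMap.comp (sg (X b)).toLinearMap) := by
    apply A_ext K b
    · simp [emb_inl, d_one]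
    · intro i
      simp [emb_inr, DD_cons]
  exact LinearMap.congr_fun this a

theorem DD_act (b : Bool) (p : (X b).A) (x : FF K) : DD K (act K b p x) =
    act K b ((X b).d p) x + act K b (sg (X b) p) (DD K x) := by
  have : (DD K).comp (act K b p) = act K b ((X b).d p) + (act K b (sg (X b) p)).comp (DD K) := by
    apply FF_ext_emb K b
    intro w a
    simp only [LinearMap.comp_apply, LinearMap.add_apply, act_emb, DD_emb, map_add, d_mul, map_mul,
      Module.End.mul_apply]
    abel
  exact LinearMap.congr_fun this x

theorem DD_DD : DD K * DD K = 0 := by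
  apply FF_ext
  intro w
  induction w using wd_ind with
  | h0 => simp [DD_nil]
  | h1 b i w ih =>
    have ih : DD K (DD K (wv K w.1)) = 0 := ih
    simp [DD_cons, DD_emb, DD_act, d_d, d_sg, ih]

theorem act_rep (b : Bool) : IsRep (X b) (DD K) (act K b) := by
  intro a
  apply LinearMap.ext
  intro x
  simp [DD_act]

/-- the homotopy on words -/
noncomputable def sl : (l : List (Σ b, (K b).I)) → l.IsChain (fun x y => x.1 ≠ y.1) → FF K
  | [], _ => 0
  | ⟨b, i⟩ :: l, h =>
    emb K b ⟨⟨l, (List.isChain_cons.1 h).2⟩, (List.isChain_cons.1 h).1⟩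
      ((K b).h ((K b).β (Sum.inr i)))

/-- homotopy -/
noncomputable def SS : Module.End k (FF K) := Finsupp.lift _ k _ (fun w : Wd K => sl K w.1 w.2)

theorem SS_nil : SS K (wv K (wnil K)) = 0 := lift_wv K _ _

theorem SS_cons (b : Bool) (i : (K b).I) (w : Wb K b) : SS K (wv K (wcons b i w)) =
    emb K b w ((K b).h ((K b).β (Sum.inr i))) := lift_wv K _ _

theorem SS_emb (b : Bool) (w : Wb K b) (a : (X b).A) : SS K (emb K b w a) =
    emb K b w ((K b).h a) + (K b).lam a • SS K (wv K w.1) := by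
  have : (SS K).comp (emb K b w) = (emb K b w).comp (K b).h +
      (K b).lam.smulRight (SS K (wv K w.1)) := by
    apply A_ext K b
    · simp [emb_inl, (K b).h_one, (K b).lam_one]
    · intro i
      simp [emb_inr, SS_cons, (K b).lam_inr]
  exact LinearMap.congr_fun this a

/-- span of words not starting with `b` -/
noncomputable def TT (b : Bool) : Submodule k (FF K) := Submodule.span k (Set.range (fun w : Wb K b => wv K w.1))

theorem SS_act (b : Bool) (p : (X b).A) (x : FF K) (hx : x ∈ TT K b) : SS K (act K b p x) =
    act K b ((K b).h p) x + (K b).lam p • SS K x := by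
  induction hx using Submodule.span_induction with
  | mem x hx =>
    obtain ⟨w, rfl⟩ := hx
    simp only [act_wv, SS_emb]
  | zero => simp
  | add x y _ _ hx hy => simp only [map_add, hx, hy, smul_add]; abel
  | smul c x _ hx => simp only [map_smul, hx, smul_add, smul_comm c]

theorem emb_TT (b c : Bool) (h : c ≠ b) (w : Wb K b) (a : (X b).A) (ha : (K b).lam a = 0) :
    emb K b w a ∈ TT K c := by
  have key : ∀ a, emb K b w a - (K b).lam a • wv K w.1 ∈ TT K c := by
    intro a
    have : (Submodule.mkQ (TT K c)).comp (emb K b w - (K b).lam.smulRight (wv K w.1)) = 0 := by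
      apply A_ext K b
      · simp [emb_inl, (K b).lam_one]
      · intro i
        simp only [LinearMap.comp_apply, LinearMap.sub_apply, emb_inr, LinearMap.smulRight_apply,
          (K b).lam_inr, zero_smul, sub_zero, LinearMap.zero_apply, Submodule.mkQ_apply,
          Submodule.Quotient.mk_eq_zero]
        exact Submodule.subset_span ⟨⟨wcons b i w, HN_cons b c h i w⟩, rfl⟩
    have := LinearMap.congr_fun this a
    simpa only [LinearMap.comp_apply, LinearMap.sub_apply, LinearMap.smulRight_apply,
      LinearMap.zero_apply, Submodule.mkQ_apply, Submodule.Quotient.mk_eq_zero] using this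
  have := key a
  rwa [ha, zero_smul, sub_zero] at this

theorem act_TT (b c : Bool) (h : c ≠ b) (a : (X b).A) (ha : (K b).lam a = 0)
    (x : FF K) (hx : x ∈ TT K b) : act K b a x ∈ TT K c := by
  induction hx using Submodule.span_induction with
  | mem x hx =>
    obtain ⟨w, rfl⟩ := hx
    simp only [act_wv]
    exact emb_TT K b c h w a ha
  | zero => simp
  | add x y _ _ hx hy => rw [map_add]; exact add_mem hx hy
  | smul r x _ hx => rw [map_smul]; exact Submodule.smul_mem _ r hx

theorem DD_TT (w : Wd K) : ∀ c, HN K c w → DD K (wv K w) ∈ TT K c := by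
  induction w using wd_ind with
  | h0 => intro c _; rw [DD_nil]; exact zero_mem _
  | h1 b i w ih =>
    intro c hc
    have hcb := HN_cons_ne b c i w hc
    rw [DD_cons]
    refine add_mem (emb_TT K b c hcb w _ ((K b).lam_d _)) (act_TT K b c hcb _ ?_ _ (ih b w.2))
    rw [(K b).lam_sg, (K b).lam_inr]

/-- coefficient of the empty word -/
noncomputable def eta : FF K →ₗ[k] k := Finsupp.lapply (wnil K)

theorem homotopy (x : FF K) :
    DD K (SS K x) + SS K (DD K x) = x - eta K x • wv K (wnil K) := by
  have : (DD K).comp (SS K) + (SS K).comp (DD K) =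
      LinearMap.id - (eta K).smulRight (wv K (wnil K)) := by
    apply FF_ext
    intro w
    induction w using wd_ind with
    | h0 =>
      have h0 : eta K (wv K (wnil K)) = 1 := by simp [eta, wv]
      simp [SS_nil, DD_nil, h0]
    | h1 b i w _ =>
      have h0 : eta K (wv K (wcons b i w)) = 0 := by
        have : wcons b i w ≠ wnil K := by
          intro h
          have := congrArg Subtype.val h
          simp [wcons, wnil] at this
        simp only [eta, wv, Finsupp.lapply_apply]
        exact Finsupp.single_eq_of_ne (Ne.symm this)
      have h1 := congrArg (emb K b w) ((K b).htpy ((K b).β (Sum.inr i)))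
      simp only [map_add, (K b).lam_inr, zero_smul, sub_zero, emb_inr] at h1
      simp only [LinearMap.add_apply, LinearMap.comp_apply, LinearMap.sub_apply, LinearMap.id_apply,
        LinearMap.smulRight_apply, h0, zero_smul, sub_zero, SS_cons, DD_emb, DD_cons, map_add,
        SS_emb, (K b).lam_d, add_zero, SS_act K b _ _ (DD_TT K w.1 b w.2), (K b).lam_sg,
        (K b).lam_inr, (K b).h_sg, map_neg, LinearMap.neg_apply]
      rw [← h1]
      abel
  exact LinearMap.congr_fun this x

variable {C : DGA k} (ι : ∀ b, DGAHom (X b) C)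

/-- multiply out a word in `C` -/
noncomputable def psi : FF K →ₗ[k] C.A :=
  Finsupp.lift _ k _ (fun w : Wd K =>
    (w.1.map (fun x => (ι x.1).toAlg ((K x.1).β (Sum.inr x.2)))).prod)

theorem psi_nil : psi K ι (wv K (wnil K)) = 1 := lift_wv K _ _

theorem psi_cons (b : Bool) (i : (K b).I) (w : Wb K b) : psi K ι (wv K (wcons b i w)) =
    (ι b).toAlg ((K b).β (Sum.inr i)) * psi K ι (wv K w.1) := by
  unfold psi
  rw [lift_wv, lift_wv]
  simp [wcons]

theorem psi_emb (b : Bool) (w : Wb K b) (a : (X b).A) : psi K ι (emb K b w a) =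
    (ι b).toAlg a * psi K ι (wv K w.1) := by
  have : (psi K ι).comp (emb K b w) =
      (LinearMap.mulRight k (psi K ι (wv K w.1))).comp (ι b).toAlg.toLinearMap := by
    apply A_ext K b
    · simp [emb_inl]
    · intro i
      simp [emb_inr, psi_cons]
  exact LinearMap.congr_fun this a

theorem psi_act (b : Bool) (p : (X b).A) (x : FF K) : psi K ι (act K b p x) =
    (ι b).toAlg p * psi K ι x := by
  have : (psi K ι).comp (act K b p) = (LinearMap.mulLeft k ((ι b).toAlg p)).comp (psi K ι) := by
    apply FF_ext_emb K b
    intro w a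
    simp [act_emb, psi_emb, mul_assoc]
  exact LinearMap.congr_fun this x

theorem psi_DD (x : FF K) : psi K ι (DD K x) = C.d (psi K ι x) := by
  have : (psi K ι).comp (DD K) = C.d.comp (psi K ι) := by
    apply FF_ext
    intro w
    induction w using wd_ind with
    | h0 => simp [DD_nil, psi_nil, d_one]
    | h1 b i w ih =>
      have ih : psi K ι (DD K (wv K w.1)) = C.d (psi K ι (wv K w.1)) := ih
      simp [DD_cons, psi_cons, psi_emb, psi_act, d_mul, (ι b).map_d, ← hom_sg, ih]
  exact LinearMap.congr_fun this x

theorem final {k : Type} [Field k] {X : Bool → DGA k} (K : ∀ b, Ctr (X b)) {C : DGA k}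
    (ι : ∀ b, DGAHom (X b) C)
    (hcoprod : ∀ (D : DGA k) (f : ∀ b, DGAHom (X b) D),
      ∃! h : DGAHom C D, ∀ b a, h.toAlg ((ι b).toAlg a) = (f b).toAlg a) :
    Nonempty (C.H ≃ₗ[k] k) := by
  -- the action of `C` on words
  obtain ⟨Φ, hΦ, -⟩ := hcoprod (EndDGA (DD K) (DD_DD K))
    (fun b => repHom (X b) (DD K) (DD_DD K) (act K b) (act_rep K b))
  let ρ : C.A →ₐ[k] Module.End k (FF K) := (ev k (FF K)).comp Φ.toAlg
  have hρ : IsRep C (DD K) ρ := rep_of_hom C _ _ Φ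
  have hρι : ∀ b a, ρ ((ι b).toAlg a) = act K b a := by
    intro b a
    change ev k (FF K) (Φ.toAlg ((ι b).toAlg a)) = _
    rw [hΦ, repHom_ev]
  -- `psi` is equivariant
  have hequi : ∀ c x, psi K ι (ρ c x) = c * psi K ι x := by
    let δ : Module.End k (FF K × C.A) := LinearMap.prodMap (DD K) C.d
    have hδ : δ * δ = 0 := by
      apply LinearMap.ext
      rintro ⟨x, y⟩
      have := LinearMap.congr_fun (DD_DD K) x
      exact Prod.ext this (d_d C y)
    let R : C.A →ₐ[k] Module.End k (FF K × C.A) :=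
      (LinearMap.prodMapAlgHom k (FF K) C.A).comp (ρ.prod (Algebra.lmul k C.A))
    have hR : ∀ c x y, R c (x, y) = (ρ c x, c * y) := fun c x y => rfl
    let u : (FF K × C.A) ≃ₗ[k] (FF K × C.A) :=
      { toFun := fun z => (z.1, z.2 + psi K ι z.1)
        map_add' := fun z z' => by ext <;> simp; abel
        map_smul' := fun r z => by ext <;> simp
        invFun := fun z => (z.1, z.2 - psi K ι z.1)
        left_inv := fun z => by simp
        right_inv := fun z => by simp }
    let R' : C.A →ₐ[k] Module.End k (FF K × C.A) :=
      (LinearEquiv.conjAlgEquiv k u).toAlgHom.comp R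
    have hR' : ∀ c x y, R' c (x, y) = (ρ c x, c * (y - psi K ι x) + psi K ι (ρ c x)) :=
      fun c x y => rfl
    have hδ' : ∀ x y, δ (x, y) = (DD K x, C.d y) := fun x y => rfl
    have hρ' : ∀ c x, ρ (C.d c) x = DD K (ρ c x) - ρ (sg C c) (DD K x) :=
      fun c x => LinearMap.congr_fun (hρ c) x
    have repR : IsRep C δ R := by
      intro c
      apply LinearMap.ext
      rintro ⟨x, y⟩
      simp only [LinearMap.sub_apply, Module.End.mul_apply, hR, hδ', hρ', d_mul]
      ext1 <;> simp
    have repR' : IsRep C δ R' := by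
      intro c
      apply LinearMap.ext
      rintro ⟨x, y⟩
      simp only [LinearMap.sub_apply, Module.End.mul_apply, hR', hδ', hρ', d_mul, map_add, map_sub,
        psi_DD, mul_sub]
      ext1
      · simp
      · simp only [Prod.snd_sub]; abel
    have hRR : ∀ b a, R ((ι b).toAlg a) = R' ((ι b).toAlg a) := by
      intro b a
      apply LinearMap.ext
      rintro ⟨x, y⟩
      rw [hR, hR', hρι, psi_act, mul_sub, sub_add_cancel]
    let G := repHom C δ hδ R repR
    let G' := repHom C δ hδ R' repR'
    have hGG : ∀ b a, G.toAlg ((ι b).toAlg a) = G'.toAlg ((ι b).toAlg a) := by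
      intro b a
      induction a using hom_ind (X b) with
      | h0 => simp only [map_zero]
      | h1 i a ha =>
        have hm := (ι b).map_grading i a ha
        exact (repHom_mono C δ hδ R repR i _ hm).trans
          ((congrArg (monomial i) (hRR b a)).trans (repHom_mono C δ hδ R' repR' i _ hm).symm)
      | h2 a a' h h' => simp only [map_add, h, h']
    have hu := (hcoprod (EndDGA δ hδ) (fun b =>
      { toAlg := G.toAlg.comp (ι b).toAlg
        map_d := fun a => by
          rw [AlgHom.comp_apply, AlgHom.comp_apply, (ι b).map_d, G.map_d]
        map_grading := fun i a ha => G.map_grading i _ ((ι b).map_grading i a ha) })).unique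
      (y₁ := G) (y₂ := G') (fun b a => rfl) (fun b a => (hGG b a).symm)
    intro c x
    have h1 : R c = R' c := by
      rw [← repHom_ev C δ hδ R repR c, ← repHom_ev C δ hδ R' repR' c]
      exact congrArg (fun g : DGAHom C (EndDGA δ hδ) => ev k _ (g.toAlg c)) hu
    have h2 := congrArg Prod.snd (LinearMap.congr_fun h1 (x, 0))
    rw [hR, hR'] at h2
    simp only [mul_zero, zero_sub, mul_neg] at h2
    exact (neg_add_eq_zero.1 h2.symm).symm
  let o := wv K (wnil K)
  have hpsi : ∀ c, psi K ι (ρ c o) = c := by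
    intro c; rw [hequi, psi_nil, mul_one]
  have hd : ∀ c, DD K (ρ c o) = ρ (C.d c) o := by
    intro c
    have := LinearMap.congr_fun (hρ c) o
    rw [this]
    simp [o, DD_nil]
  apply H_of
  · intro h1
    have h2 : ρ 1 o = ρ 0 o := by rw [h1]
    have h3 : o = 0 := by simpa using h2
    have h4 := congrArg (eta K) h3
    simp [o, eta, wv] at h4
  · intro z hz
    have h := congrArg (psi K ι) (homotopy K (ρ z o))
    rw [hd, hz, map_zero, LinearMap.zero_apply, map_zero, add_zero, psi_DD, map_sub, hpsi, map_smul,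
      psi_nil] at h
    exact ⟨eta K (ρ z o), psi K ι (SS K (ρ z o)), by rw [h]; abel⟩

end words

end FP

/- STATEMENT 1: Let `P`, `Q` be associative dg-algebras over a field `k`, concentrated
in non-negative degrees, with `H•(P) ≅ k` and `H•(Q) ≅ k`, and let `Q` be augmented
(by a map of dg-algebras `ε : Q → k`).  Then any coproduct (free product) `C = P * Q`
of `P` and `Q` in the category of associative dg-algebras satisfies `H•(P * Q) ≅ k`. -/
theorem stmt_1 (k : Type) [Field k] (P Q C : DGA k)
    (hP : Nonempty (P.H ≃ₗ[k] k)) (hQ : Nonempty (Q.H ≃ₗ[k] k))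
    (ε : Q.A →ₐ[k] k) (hε : ∀ a : Q.A, ε (Q.d a) = 0)
    (ι₁ : DGAHom P C) (ι₂ : DGAHom Q C)
    (hcoprod : ∀ (D : DGA k) (f : DGAHom P D) (g : DGAHom Q D),
      ∃! h : DGAHom C D,
        (∀ a : P.A, h.toAlg (ι₁.toAlg a) = f.toAlg a) ∧
        (∀ b : Q.A, h.toAlg (ι₂.toAlg b) = g.toAlg b)) :
    Nonempty (C.H ≃ₗ[k] k) := by
  obtain ⟨KP⟩ := FP.exists_ctr P hP
  obtain ⟨KQ⟩ := FP.exists_ctr Q hQ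
  let X : Bool → DGA k := fun b => match b with
    | true => P
    | false => Q
  let K : ∀ b, FP.Ctr (X b) := fun b => match b with
    | true => KP
    | false => KQ
  let ι : ∀ b, DGAHom (X b) C := fun b => match b with
    | true => ι₁
    | false => ι₂
  refine FP.final K ι ?_
  intro D f
  obtain ⟨h, hh, hu⟩ := hcoprod D (f true) (f false)
  refine ⟨h, ?_, ?_⟩
  · intro b a
    cases b
    · exact hh.2 a
    · exact hh.1 a
  · intro h' hh'
    exact hu h' ⟨fun a => hh' true a, fun a => hh' false a⟩
end

section
/- Let $R_n = k\langle x_1, \ldots, x_n \rangle$ be the free graded associative dg-algebra on $n$ generators, each of degree $1$, over a field $k$ of characteristic $0$, with differential determined by $d(x_i) = x_i^2$ for all $i$. Then $H^\bullet(R_n) \cong k$, concentrated in degree $0$. -/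
namespace Stmt2
open AddMonoidAlgebra

noncomputable section

variable {k : Type} [Field k] {n : ℕ}

abbrev B (k : Type) [Field k] (n : ℕ) : Type := AddMonoidAlgebra k (FreeAddMonoid (Fin n))

def wd (w : FreeAddMonoid (Fin n)) : B k n := single w 1

def gen (a : Fin n) : B k n := wd (FreeAddMonoid.of a)

lemma wd_zero : (wd 0 : B k n) = 1 := rfl

lemma wd_add (v w : FreeAddMonoid (Fin n)) : (wd (v + w) : B k n) = wd v * wd w := by
  simp [wd, single_mul_single]

/-- Linear extension of a function on words. -/
def ext {M : Type} [AddCommGroup M] [Module k M] (f : FreeAddMonoid (Fin n) → M) : B k n →ₗ[k] M where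
  toFun b := Finsupp.linearCombination k f b.coeff
  map_add' x y := by simp
  map_smul' c x := by simp

lemma ext_wd {M : Type} [AddCommGroup M] [Module k M] (f : FreeAddMonoid (Fin n) → M)
    (w : FreeAddMonoid (Fin n)) : (ext f : B k n →ₗ[k] M) (wd w) = f w := by
  simp [ext, wd]

lemma lin_ind {p : B k n → Prop} (h0 : p 0) (hadd : ∀ x y, p x → p y → p (x + y))
    (hs : ∀ (c : k) x, p x → p (c • x)) (hw : ∀ w, p (wd w)) (b : B k n) : p b := by
  classical
  induction b using AddMonoidAlgebra.induction with
  | zero => exact h0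
  | single_add m r y _ _ ih =>
    refine hadd _ _ ?_ ih
    have : (single m r : B k n) = r • wd m := by simp [wd]
    rw [this]
    exact hs _ _ (hw m)

/-- Differential on words. -/
def dW (w : FreeAddMonoid (Fin n)) : B k n :=
  FreeAddMonoid.recOn w 0 (fun a v r => gen a * gen a * wd v - gen a * r)

def dB : B k n →ₗ[k] B k n := ext dW

lemma dB_one : dB (1 : B k n) = 0 := by
  rw [← wd_zero, dB, ext_wd]; rfl

lemma dB_gen (a : Fin n) (b : B k n) : dB (gen a * b) = gen a * gen a * b - gen a * dB b := by
  induction b using lin_ind with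
  | h0 => simp
  | hadd x y hx hy => simp only [mul_add, map_add, hx, hy]; abel
  | hs c x hx => simp only [mul_smul_comm, map_smul, hx, smul_sub]
  | hw w => rw [gen, ← wd_add, dB, ext_wd, ext_wd]; rfl

/-- Projection onto words with odd leading run of `a`. -/
def pW (a : Fin n) (w : FreeAddMonoid (Fin n)) : B k n :=
  FreeAddMonoid.recOn w 0 (fun b v r => if a = b then gen b * wd v - gen b * r else 0)

def pB (a : Fin n) : B k n →ₗ[k] B k n := ext (pW a)

lemma pB_one (a : Fin n) : pB a (1 : B k n) = 0 := by
  rw [← wd_zero, pB, ext_wd]; rfl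

lemma pB_gen (a : Fin n) (b : B k n) : pB a (gen a * b) = gen a * b - gen a * pB a b := by
  induction b using lin_ind with
  | h0 => simp
  | hadd x y hx hy => simp only [mul_add, map_add, hx, hy]; abel
  | hs c x hx => simp only [mul_smul_comm, map_smul, hx, smul_sub]
  | hw w =>
    rw [gen, ← wd_add, pB, ext_wd, ext_wd, wd_add]
    exact if_pos rfl

lemma pB_gen_ne {a c : Fin n} (h : a ≠ c) (b : B k n) : pB a (gen c * b) = 0 := by
  induction b using lin_ind with
  | h0 => simp
  | hadd x y hx hy => simp only [mul_add, map_add, hx, hy, add_zero]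
  | hs c x hx => simp only [mul_smul_comm, map_smul, hx, smul_zero]
  | hw w =>
    rw [gen, ← wd_add, pB, ext_wd]
    exact if_neg h

/-- The homotopy on words. -/
def hW (w : FreeAddMonoid (Fin n)) : B k n :=
  FreeAddMonoid.recOn w 0 (fun b v _ => pB b (wd v))

def hB : B k n →ₗ[k] B k n := ext hW

lemma hB_one : hB (1 : B k n) = 0 := by
  rw [← wd_zero, hB, ext_wd]; rfl

lemma hB_gen (a : Fin n) (b : B k n) : hB (gen a * b) = pB a b := by
  induction b using lin_ind with
  | h0 => simp
  | hadd x y hx hy => simp only [mul_add, map_add, hx, hy]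
  | hs c x hx => simp only [mul_smul_comm, map_smul, hx]
  | hw w => rw [gen, ← wd_add, hB, ext_wd]; rfl

def eB : B k n →ₗ[k] k := ext (fun w => FreeAddMonoid.recOn w 1 (fun _ _ _ => 0))

lemma eB_one : eB (1 : B k n) = 1 := by
  rw [← wd_zero, eB, ext_wd]; rfl

lemma eB_gen (a : Fin n) (b : B k n) : eB (gen a * b) = 0 := by
  induction b using lin_ind with
  | h0 => simp
  | hadd x y hx hy => simp only [mul_add, map_add, hx, hy, add_zero]
  | hs c x hx => simp only [mul_smul_comm, map_smul, hx, smul_zero]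
  | hw w => rw [gen, ← wd_add, eB, ext_wd]; rfl

lemma gen_ind {p : B k n → Prop} (h0 : p 0) (hadd : ∀ x y, p x → p y → p (x + y))
    (hs : ∀ (c : k) x, p x → p (c • x)) (h1 : p 1) (hg : ∀ a b, p b → p (gen a * b))
    (b : B k n) : p b := by
  induction b using lin_ind with
  | h0 => exact h0
  | hadd x y hx hy => exact hadd x y hx hy
  | hs c x hx => exact hs c x hx
  | hw w =>
    induction w using FreeAddMonoid.inductionOn' with
    | zero => exact h1
    | of_add a w ih => rw [wd_add]; exact hg a _ ih

lemma dd (b : B k n) : dB (dB b) = 0 := by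
  induction b using gen_ind with
  | h0 => simp
  | hadd x y hx hy => simp [hx, hy]
  | hs c x hx => simp [hx]
  | h1 => simp [dB_one]
  | hg a b ih =>
    simp only [dB_gen, map_sub, mul_assoc, ih]
    noncomm_ring

lemma comm_dp (a : Fin n) (b : B k n) : dB (pB a b) - pB a (dB b) = gen a * pB a b := by
  induction b using gen_ind with
  | h0 => simp
  | hadd x y hx hy =>
    simp only [map_add, mul_add, ← hx, ← hy]; abel
  | hs c x hx => simp only [map_smul, mul_smul_comm, ← hx, smul_sub]
  | h1 => simp [dB_one, pB_one]
  | hg c b ih =>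
    by_cases h : a = c
    · subst h
      have ih' : dB (pB a b) = pB a (dB b) + gen a * pB a b := by rw [← ih]; abel
      simp only [dB_gen, pB_gen, map_sub, mul_assoc, ih']
      noncomm_ring
    · simp [dB_gen, pB_gen_ne h, mul_assoc]

lemma homotopy (b : B k n) : dB (hB b) + hB (dB b) = b - eB b • 1 := by
  induction b using gen_ind with
  | h0 => simp
  | hadd x y hx hy =>
    have : dB (hB (x + y)) + hB (dB (x + y)) =
      (dB (hB x) + hB (dB x)) + (dB (hB y) + hB (dB y)) := by simp only [map_add]; abel
    rw [this, hx, hy, map_add, add_smul]; abel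
  | hs c x hx =>
    simp only [map_smul, ← smul_add, hx, smul_sub, smul_assoc]
  | h1 => simp [dB_one, hB_one, eB_one]
  | hg a b ih =>
    have h := comm_dp a b
    have h' : dB (pB a b) = pB a (dB b) + gen a * pB a b := by rw [← h]; abel
    simp only [dB_gen, map_sub, mul_assoc, hB_gen, eB_gen, pB_gen, h', zero_smul]
    abel

lemma eB_d (b : B k n) : eB (dB b) = 0 := by
  induction b using gen_ind with
  | h0 => simp
  | hadd x y hx hy => simp [hx, hy]
  | hs c x hx => simp [hx]
  | h1 => simp [dB_one]
  | hg a b ih => simp [dB_gen, mul_assoc, eB_gen]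

def len (n : ℕ) : FreeAddMonoid (Fin n) →+ ℕ where
  toFun := FreeAddMonoid.length
  map_zero' := rfl
  map_add' := FreeAddMonoid.length_add

abbrev gr (k : Type) [Field k] (n : ℕ) : ℕ → Submodule k (B k n) := gradeBy k (len n)

lemma wd_mem (w : FreeAddMonoid (Fin n)) : (wd w : B k n) ∈ gr k n (len n w) :=
  single_mem_gradeBy _ _ _

lemma gr_le {i : ℕ} {S : Submodule k (B k n)} (h : ∀ w, len n w = i → wd w ∈ S) : gr k n i ≤ S := by
  intro b hb
  have hb' : ∀ m ∈ b.coeff.support, len n m = i := hb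
  have : b = ∑ m ∈ b.coeff.support, b.coeff m • wd m := by
    conv_lhs => rw [← AddMonoidAlgebra.sum_coeff_single b]
    simp [Finsupp.sum, wd]
  rw [this]
  exact S.sum_mem fun m hm => S.smul_mem _ (h m (hb' m hm))

lemma dB_wd_mem (w : FreeAddMonoid (Fin n)) : dB (wd w : B k n) ∈ gr k n (len n w + 1) := by
  induction w using FreeAddMonoid.inductionOn' with
  | zero => rw [wd_zero, dB_one]; exact Submodule.zero_mem _
  | of_add a w ih =>
    have hg : (gen a : B k n) ∈ gr k n 1 := wd_mem (FreeAddMonoid.of a)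
    have e : len n (FreeAddMonoid.of a + w) = 1 + len n w := by rw [map_add]; rfl
    rw [wd_add, e]
    change dB (gen a * wd w) ∈ _
    rw [dB_gen]
    refine Submodule.sub_mem _ ?_ ?_
    · have := SetLike.mul_mem_graded (SetLike.mul_mem_graded hg hg) (wd_mem (k := k) w)
      convert this using 2; omega
    · have := SetLike.mul_mem_graded hg ih
      convert this using 2; omega

lemma leib_wd (w : FreeAddMonoid (Fin n)) (b : B k n) :
    dB (wd w * b) = dB (wd w) * b + ((-1 : k) ^ (len n w)) • (wd w * dB b) := by
  induction w using FreeAddMonoid.inductionOn' with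
  | zero => rw [wd_zero, dB_one]; simp
  | of_add a w ih =>
    have e : len n (FreeAddMonoid.of a + w) = len n w + 1 := by rw [map_add, add_comm]; rfl
    rw [wd_add, e]
    change dB (gen a * wd w * b) = dB (gen a * wd w) * b + _ • (gen a * wd w * _)
    rw [mul_assoc, dB_gen, dB_gen, ih, pow_succ]
    simp only [mul_add, sub_mul, mul_assoc, mul_smul_comm, mul_neg, mul_one, neg_smul]
    abel

def F (k : Type) [Field k] (n : ℕ) : DGA k where
  A := B k n
  ringA := inferInstance
  algA := inferInstance
  grading := gr k n
  graded := gradeBy.gradedAlgebra (len n)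
  d := dB
  d_sq := LinearMap.ext fun b => dd b
  d_deg i a ha := by
    have : gr k n i ≤ (gr k n (i+1)).comap dB := gr_le fun w hw => by
      subst hw; exact dB_wd_mem w
    exact this ha
  leibniz i a ha b := by
    let L : B k n →ₗ[k] B k n := dB ∘ₗ LinearMap.mulRight k b
    let L' : B k n →ₗ[k] B k n := LinearMap.mulRight k b ∘ₗ dB +
      ((-1 : k) ^ i) • LinearMap.mulRight k (dB b)
    have : gr k n i ≤ LinearMap.eqLocus L L' := gr_le fun w hw => by
      subst hw; exact leib_wd w b
    exact this ha

section
variable (R : DGA k) (x : Fin n → R.A)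

def gHom : B k n →ₐ[k] R.A :=
  AddMonoidAlgebra.lift k R.A _ (AddMonoidHom.toMultiplicativeLeft
    (FreeAddMonoid.lift (fun i => Additive.ofMul (x i))))

lemma gHom_gen (a : Fin n) : gHom R x (gen a) = x a := by
  simp [gHom, gen, wd]

lemma d_one : R.d 1 = 0 := by
  have := R.graded
  have h := R.leibniz 0 1 SetLike.GradedOne.one_mem 1
  simpa using h

lemma gHom_d (hx : ∀ i, x i ∈ R.grading 1) (hdx : ∀ i, R.d (x i) = x i * x i)
    (b : B k n) : gHom R x (dB b) = R.d (gHom R x b) := by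
  induction b using gen_ind with
  | h0 => simp
  | hadd x y hx hy => simp [hx, hy]
  | hs c x hx => simp [hx]
  | h1 => simp [dB_one, d_one]
  | hg a b ih =>
    rw [dB_gen, map_mul, R.leibniz 1 _ (by rw [gHom_gen]; exact hx a)]
    simp [gHom_gen, hdx, ih, sub_eq_add_neg]

lemma gHom_gr (hx : ∀ i, x i ∈ R.grading 1) (i : ℕ) (b : B k n) (hb : b ∈ gr k n i) : gHom R x b ∈ R.grading i := by
  have := R.graded
  have : gr k n i ≤ (R.grading i).comap (gHom R x).toLinearMap := gr_le fun w hw => by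
    subst hw
    clear hb
    induction w using FreeAddMonoid.inductionOn' with
    | zero => simpa [wd_zero] using SetLike.GradedOne.one_mem (A := R.grading)
    | of_add a w ih =>
      have e : len n (FreeAddMonoid.of a + w) = 1 + len n w := by rw [map_add]; rfl
      rw [wd_add, e]
      change gHom R x (gen a * wd w) ∈ R.grading (1 + len n w)
      rw [map_mul, gHom_gen]
      exact SetLike.mul_mem_graded (hx a) ih
  exact this hb

end

theorem final (R : DGA k) (h : R.A →ₗ[k] R.A) (e : R.A →ₗ[k] k) (he1 : e 1 = 1)
    (hed : ∀ a, e (R.d a) = 0)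
    (hh : ∀ a, R.d (h a) + h (R.d a) = a - e a • 1) : Nonempty (R.H ≃ₗ[k] k) := by
  let φ : LinearMap.ker R.d →ₗ[k] k := e ∘ₗ (LinearMap.ker R.d).subtype
  have hs : Function.Surjective φ := fun c =>
    ⟨⟨c • 1, by simp [d_one]⟩, by simp [φ, he1]⟩
  have hk : Submodule.comap (LinearMap.ker R.d).subtype (LinearMap.range R.d) = LinearMap.ker φ := by
    ext ⟨a, ha⟩
    have ha' : R.d a = 0 := ha
    simp only [Submodule.mem_comap, LinearMap.mem_range, LinearMap.mem_ker, φ, LinearMap.comp_apply,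
      Submodule.subtype_apply]
    constructor
    · rintro ⟨b, rfl⟩; exact hed b
    · intro h0
      refine ⟨h a, ?_⟩
      have := hh a
      simpa [ha', h0] using this
  exact ⟨(Submodule.quotEquivOfEq _ _ hk).trans (φ.quotKerEquivOfSurjective hs)⟩

end

end Stmt2

theorem stmt_2 (k : Type) [Field k] [CharZero k] (n : ℕ) (R : DGA k)
    (x : Fin n → R.A)
    (hx : ∀ i, x i ∈ R.grading 1)
    (hdx : ∀ i, R.d (x i) = x i * x i)
    (hfree : ∀ (C : DGA k) (y : Fin n → C.A),
      (∀ i, y i ∈ C.grading 1) → (∀ i, C.d (y i) = y i * y i) →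
        ∃! f : DGAHom R C, ∀ i, f.toAlg (x i) = y i) :
    Nonempty (R.H ≃ₗ[k] k) := by
  obtain ⟨f, hf, -⟩ := hfree (Stmt2.F k n) (fun i => Stmt2.gen i)
    (fun i => Stmt2.wd_mem (FreeAddMonoid.of i)) (fun i => by
      have h := Stmt2.dB_gen (k := k) i 1
      rw [Stmt2.dB_one, mul_zero, sub_zero, mul_one, mul_one] at h
      exact h)
  let f' : R.A →ₐ[k] Stmt2.B k n := f.toAlg
  have hfd : ∀ a, f' (R.d a) = Stmt2.dB (f' a) := f.map_d
  let g := Stmt2.gHom R x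
  let gf : DGAHom R R :=
    { toAlg := g.comp f'
      map_d := fun a => by
        change g (f' (R.d a)) = R.d (g (f' a))
        rw [hfd]; exact Stmt2.gHom_d R x hx hdx _
      map_grading := fun i a ha => Stmt2.gHom_gr R x hx i _ (f.map_grading i a ha) }
  let idR : DGAHom R R :=
    { toAlg := AlgHom.id k R.A, map_d := fun _ => rfl, map_grading := fun _ _ h => h }
  have hgf : gf = idR := (hfree R x hx hdx).unique
    (fun i => by
      change g (f' (x i)) = x i
      have : f' (x i) = Stmt2.gen i := hf i
      rw [this]; exact Stmt2.gHom_gen R x i) (fun i => rfl)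
  have hid : ∀ a, g (f' a) = a := fun a => by
    have := congrArg (fun q : DGAHom R R => q.toAlg a) hgf
    exact this
  refine Stmt2.final R (g.toLinearMap ∘ₗ Stmt2.hB ∘ₗ f'.toLinearMap)
    (Stmt2.eB ∘ₗ f'.toLinearMap) ?_ ?_ ?_
  · simp [Stmt2.eB_one]
  · intro a; simp [hfd, Stmt2.eB_d]
  · intro a
    have := congrArg g (Stmt2.homotopy (f' a))
    have h2 := Stmt2.gHom_d R x hx hdx (Stmt2.hB (f' a))
    simp only [map_add, map_sub, map_smul, map_one, hid] at this
    simp only [LinearMap.comp_apply, AlgHom.toLinearMap_apply, hfd]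
    rw [← this]
    exact congrArg (· + _) h2.symm
end
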